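/- Let x̄ be a local minimizer of problem (ODP) and suppose the standing sum-rule assumption holds. Then: (a) if NNAMCQ is satisfied at x̄, then ODP-subMFC holds at x̄; (b) if d ∈ Ĉ(x̄) ∩ 𝕊, ∇f(x̄) ≠ 0, and FOSCMS(d) is satisfied at x̄, then ODP-subMFC(d) holds at x̄. -/

import Mathlib

open Filter Topology Metric Set
open scoped RealInnerProductSpace Pointwise

noncomputable section

/-- Euclidean space `ℝ^n`. -/
abbrev Eu (n : ℕ) := EuclideanSpace ℝ (Fin n)

section Cones

variable {H : Type*} [NormedAddCommGroup H] [InnerProductSpace ℝ H]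

/-- Tangent (Bouligand) cone to `Ω` at `x` (empty if `x ∉ Ω`). -/
def tanCone (Ω : Set H) (x : H) : Set H :=
  {d | x ∈ Ω ∧ ∃ (dk : ℕ → H) (tk : ℕ → ℝ),
    Tendsto dk atTop (𝓝 d) ∧ (∀ k, 0 < tk k) ∧ Tendsto tk atTop (𝓝 0) ∧
    ∀ k, x + tk k • dk k ∈ Ω}

/-- Polar cone of a set. -/
def polarCone (C : Set H) : Set H := {y | ∀ x ∈ C, ⟪x, y⟫ ≤ 0}

/-- Regular (Fréchet) normal cone: polar of the tangent cone (empty if `x ∉ Ω`). -/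
def regNormal (Ω : Set H) (x : H) : Set H :=
  {η | x ∈ Ω ∧ η ∈ polarCone (tanCone Ω x)}

/-- Limiting (Mordukhovich) normal cone (empty if `x ∉ Ω`). -/
def limNormal (Ω : Set H) (x : H) : Set H :=
  {η | x ∈ Ω ∧ ∃ (xk ηk : ℕ → H),
    Tendsto xk atTop (𝓝 x) ∧ Tendsto ηk atTop (𝓝 η) ∧
    ∀ k, ηk k ∈ regNormal Ω (xk k)}

/-- Directional limiting normal cone to `Ω` at `x` in direction `d`. -/
def dirLimNormal (Ω : Set H) (x d : H) : Set H :=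
  {η | x ∈ Ω ∧ ∃ (dk : ℕ → H) (tk : ℕ → ℝ) (ηk : ℕ → H),
    Tendsto dk atTop (𝓝 d) ∧ (∀ k, 0 < tk k) ∧ Tendsto tk atTop (𝓝 0) ∧
    Tendsto ηk atTop (𝓝 η) ∧
    ∀ k, ηk k ∈ regNormal Ω (x + tk k • dk k)}

/-- The pair `(ξ, r)` as an element of the ℓ²-product `H ×₂ ℝ`. -/
def pl2 (ξ : H) (r : ℝ) : WithLp 2 (H × ℝ) := (WithLp.equiv 2 (H × ℝ)).symm (ξ, r)

/-- Epigraph of `φ` as a subset of the ℓ²-product `H ×₂ ℝ`. -/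
def epigraphSet (φ : H → ℝ) : Set (WithLp 2 (H × ℝ)) :=
  {p | φ ((WithLp.equiv 2 (H × ℝ)) p).1 ≤ ((WithLp.equiv 2 (H × ℝ)) p).2}

/-- Limiting subdifferential of `φ` at `x`. -/
def limSubdiff (φ : H → ℝ) (x : H) : Set H :=
  {ξ | pl2 ξ (-1) ∈ limNormal (epigraphSet φ) (pl2 x (φ x))}

/-- Directional limiting subdifferential of `φ` at `x` in direction `d`, where `φd`
denotes the directional derivative `φ'(x; d)`. -/
def dirLimSubdiff (φ : H → ℝ) (x d : H) (φd : ℝ) : Set H :=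
  {ξ | pl2 ξ (-1) ∈ dirLimNormal (epigraphSet φ) (pl2 x (φ x)) (pl2 d φd)}

/-- Directional neighborhood `B_{ε,δ}(d)`. -/
def dirNbhd (d : H) (ε δ : ℝ) : Set H :=
  {y | ‖y‖ ≤ ε ∧ ‖‖d‖ • y - ‖y‖ • d‖ ≤ δ * (‖y‖ * ‖d‖)}

end Cones

section Problem

variable {n l : ℕ}

/-- `F' x d` is the directional derivative of `F` at `x` in direction `d`. -/
def IsDirDeriv (F : Eu n → Eu l) (F' : Eu n → Eu n → Eu l) : Prop :=
  ∀ x d : Eu n,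
    Tendsto (fun t : ℝ => t⁻¹ • (F (x + t • d) - F x)) (𝓝[>] (0:ℝ)) (𝓝 (F' x d))

/-- Limiting subdifferential of the scalarization `⟨λ, F⟩` at `x`. -/
def scalSubdiff (F : Eu n → Eu l) (lam : Eu l) (x : Eu n) : Set (Eu n) :=
  limSubdiff (fun y => ⟪lam, F y⟫) x

/-- Directional limiting subdifferential of `⟨λ, F⟩` at `x` in direction `d`. -/
def scalDirSubdiff (F : Eu n → Eu l) (F' : Eu n → Eu n → Eu l) (lam : Eu l)
    (x d : Eu n) : Set (Eu n) :=
  dirLimSubdiff (fun y => ⟪lam, F y⟫) x d ⟪lam, F' x d⟫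

/-- Linearization cone. -/
def linCone (F : Eu n → Eu l) (F' : Eu n → Eu n → Eu l) (Γ : Set (Eu l)) (x : Eu n) :
    Set (Eu n) :=
  {d | F' x d ∈ tanCone Γ (F x)}

/-- Explicit critical cone `C(x̄)`. -/
def critCone (f : Eu n → ℝ) (F : Eu n → Eu l) (F' : Eu n → Eu n → Eu l)
    (Γ : Set (Eu l)) (x : Eu n) : Set (Eu n) :=
  {d | ⟪gradient f x, d⟫ ≤ 0 ∧ d ∈ linCone F F' Γ x}

/-- Implicit critical cone `Ĉ(x̄)`. -/
def implCritCone (f : Eu n → ℝ) (F : Eu n → Eu l) (Γ : Set (Eu l)) (x : Eu n) :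
    Set (Eu n) :=
  {d | ⟪gradient f x, d⟫ ≤ 0 ∧ d ∈ tanCone (F ⁻¹' Γ) x}

/-- M-stationarity. -/
def MStat (f : Eu n → ℝ) (F : Eu n → Eu l) (Γ : Set (Eu l)) (x : Eu n) : Prop :=
  ∃ lam : Eu l, -gradient f x ∈ scalSubdiff F lam x ∧ lam ∈ limNormal Γ (F x)

/-- M-stationarity in direction `d`. -/
def MStatDir (f : Eu n → ℝ) (F : Eu n → Eu l) (F' : Eu n → Eu n → Eu l)
    (Γ : Set (Eu l)) (x d : Eu n) : Prop :=
  ∃ lam : Eu l, -gradient f x ∈ scalDirSubdiff F F' lam x d ∧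
    lam ∈ dirLimNormal Γ (F x) (F' x d)

/-- Metric subregularity constraint qualification in direction `d`. -/
def MSCQdir (F : Eu n → Eu l) (Γ : Set (Eu l)) (x d : Eu n) : Prop :=
  ∃ ε > (0:ℝ), ∃ δ > (0:ℝ), ∃ κ > (0:ℝ), ∀ y : Eu n, y - x ∈ dirNbhd d ε δ →
    infDist y (F ⁻¹' Γ) ≤ κ * infDist (F y) Γ

/-- Metric subregularity constraint qualification. -/
def MSCQ (F : Eu n → Eu l) (Γ : Set (Eu l)) (x : Eu n) : Prop := MSCQdir F Γ x 0

/-- AM-stationary sequence w.r.t. `x`. -/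
def AMSeq (f : Eu n → ℝ) (F : Eu n → Eu l) (Γ : Set (Eu l)) (x : Eu n)
    (xk : ℕ → Eu n) (lamk δk : ℕ → Eu l) (εk : ℕ → Eu n) : Prop :=
  (∀ k, εk k - gradient f (xk k) ∈ scalSubdiff F (lamk k) (xk k)) ∧
  (∀ k, lamk k ∈ limNormal Γ (F (xk k) - δk k)) ∧
  Tendsto xk atTop (𝓝 x) ∧ Tendsto δk atTop (𝓝 0) ∧ Tendsto εk atTop (𝓝 0)

/-- AM-stationarity. -/
def AMStat (f : Eu n → ℝ) (F : Eu n → Eu l) (Γ : Set (Eu l)) (x : Eu n) : Prop :=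
  ∃ xk lamk δk εk, AMSeq f F Γ x xk lamk δk εk

/-- AM-stationary sequence w.r.t. `x` in direction `d`. -/
def AMSeqDir (f : Eu n → ℝ) (F : Eu n → Eu l) (Γ : Set (Eu l)) (x : Eu n)
    (xk : ℕ → Eu n) (lamk δk : ℕ → Eu l) (εk : ℕ → Eu n) (d : Eu n) : Prop :=
  AMSeq f F Γ x xk lamk δk εk ∧
  (∀ k, xk k ≠ x) ∧
  Tendsto (fun k => ‖xk k - x‖⁻¹ • (xk k - x)) atTop (𝓝 d) ∧
  Tendsto (fun k => ‖xk k - x‖⁻¹ • δk k) atTop (𝓝 (0 : Eu l)) ∧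
  (∃ θ : ℕ → ℝ, (∀ k, 0 ≤ θ k) ∧ Tendsto θ atTop (𝓝 0) ∧
    ∀ k, ‖‖δk k‖ • lamk k - ‖lamk k‖ • δk k‖ ≤ ‖δk k‖ * ‖lamk k‖ * θ k) ∧
  (∃ M : ℝ, ∀ k, ‖δk k‖ * ‖lamk k‖ / ‖xk k - x‖ ≤ M)

/-- AM-stationarity in direction `d`. -/
def AMStatDir (f : Eu n → ℝ) (F : Eu n → Eu l) (Γ : Set (Eu l)) (x d : Eu n) : Prop :=
  ∃ xk lamk δk εk, AMSeqDir f F Γ x xk lamk δk εk d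

/-- The Minkowski sum `Σ_i |λ_i| ∂(sgn(λ_i) F_i)(x; d)`. -/
def dirSumSet (F : Eu n → Eu l) (F' : Eu n → Eu n → Eu l) (lam : Eu l) (x d : Eu n) :
    Set (Eu n) :=
  {v | ∃ s : Fin l → Eu n,
    (∀ i, s i ∈ |lam i| • dirLimSubdiff (fun y => Real.sign (lam i) * F y i) x d
        (Real.sign (lam i) * F' x d i)) ∧
    v = ∑ i, s i}

/-- Standing sum-rule assumption. -/
def SumRule (F : Eu n → Eu l) (F' : Eu n → Eu n → Eu l) : Prop :=
  ∀ (x d : Eu n) (lam : Eu l), scalDirSubdiff F F' lam x d = dirSumSet F F' lam x d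

end Problem


section ODP

variable {n l t : ℕ}

/-- The box `Γ_j = ∏_i [a_i^j, b_i^j]` (interval endpoints in the extended reals). -/
def GammaJ (a b : Fin t → Fin l → EReal) (j : Fin t) : Set (Eu l) :=
  {y | ∀ i, a j i ≤ ((y i : ℝ) : EReal) ∧ ((y i : ℝ) : EReal) ≤ b j i}

/-- The orthodisjunctive set `Γ = ⋃_j Γ_j`. -/
def GammaODP (a b : Fin t → Fin l → EReal) : Set (Eu l) := ⋃ j, GammaJ a b j

/-- The index set `I(x, δ)` of active interval endpoints. -/
def activeI (F : Eu n → Eu l) (a b : Fin t → Fin l → EReal) (x : Eu n) (δ : Eu l) :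
    Set (Fin l) :=
  {i | ∃ j, F x - δ ∈ GammaJ a b j ∧
      ((((F x - δ) i : ℝ) : EReal) = a j i ∨ (((F x - δ) i : ℝ) : EReal) = b j i)}

/-- ODP subset Mangasarian–Fromovitz condition. -/
def ODPsubMFC (f : Eu n → ℝ) (F : Eu n → Eu l) (a b : Fin t → Fin l → EReal)
    (x : Eu n) : Prop :=
  ∃ (I : Set (Fin l)) (xk : ℕ → Eu n) (lamk δk : ℕ → Eu l) (εk : ℕ → Eu n),
    I ⊆ activeI F a b x 0 ∧
    AMSeq f F (GammaODP a b) x xk lamk δk εk ∧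
    (∀ k, I = activeI F a b (xk k) (δk k)) ∧
    (I = ∅ ∨ ∀ u : Eu l, u ≠ 0 → (∀ i, 0 ≤ u i) → (∀ i ∉ I, u i = 0) → ∀ k : ℕ,
      (0 : Eu n) ∉ {v | ∃ s : Fin l → Eu n,
        (∀ i ∈ I, s i ∈ u i • limSubdiff (fun y => Real.sign (lamk k i) * F y i) x) ∧
        v = ∑ i, I.indicator s i})

/-- ODP subset Mangasarian–Fromovitz condition in direction `d`. -/
def ODPsubMFCdir (f : Eu n → ℝ) (F : Eu n → Eu l) (F' : Eu n → Eu n → Eu l)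
    (a b : Fin t → Fin l → EReal) (x d : Eu n) : Prop :=
  ∃ (I : Set (Fin l)) (xk : ℕ → Eu n) (lamk δk : ℕ → Eu l) (εk : ℕ → Eu n),
    I ⊆ activeI F a b x 0 ∧
    AMSeqDir f F (GammaODP a b) x xk lamk δk εk d ∧
    (∀ k, I = activeI F a b (xk k) (δk k)) ∧
    (I = ∅ ∨ ∀ u : Eu l, u ≠ 0 → (∀ i, 0 ≤ u i) → (∀ i ∉ I, u i = 0) → ∀ k : ℕ,
      (0 : Eu n) ∉ {v | ∃ s : Fin l → Eu n,
        (∀ i ∈ I, s i ∈ u i • dirLimSubdiff (fun y => Real.sign (lamk k i) * F y i) x d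
            (Real.sign (lamk k i) * F' x d i)) ∧
        v = ∑ i, I.indicator s i})

/-- No nonzero abnormal multiplier constraint qualification. -/
def NNAMCQ (F : Eu n → Eu l) (Γ : Set (Eu l)) (x : Eu n) : Prop :=
  ∀ lam : Eu l, (0 : Eu n) ∈ scalSubdiff F lam x → lam ∈ limNormal Γ (F x) → lam = 0

/-- First-order sufficient condition for metric subregularity in direction `d`. -/
def FOSCMS (F : Eu n → Eu l) (F' : Eu n → Eu n → Eu l) (Γ : Set (Eu l))
    (x d : Eu n) : Prop :=
  ∀ lam : Eu l, (0 : Eu n) ∈ scalDirSubdiff F F' lam x d →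
    lam ∈ dirLimNormal Γ (F x) (F' x d) → lam = 0

end ODP


section Helpers

/-- Regular (Frechet) subgradient. -/
def RegSub {n : ℕ} (φ : Eu n → ℝ) (x v : Eu n) : Prop :=
  ∀ ε > (0:ℝ), ∀ᶠ y in 𝓝 x, φ x + ⟪v, y - x⟫ - ε * ‖y - x‖ ≤ φ y

lemma RegSub.const {n : ℕ} {c : ℝ} {x v : Eu n} (h : RegSub (fun _ => c) x v) : v = 0 := by
  by_contra hv
  have hv' : 0 < ‖v‖ := norm_pos_iff.mpr hv
  have h1 := h (‖v‖/2) (by positivity)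
  have ht : Tendsto (fun s : ℝ => x + s • v) (𝓝[>] 0) (𝓝 x) := by
    have : Tendsto (fun s : ℝ => x + s • v) (𝓝 0) (𝓝 (x + (0:ℝ) • v)) := by
      apply Continuous.tendsto; fun_prop
    simp only [zero_smul, add_zero] at this
    exact this.mono_left nhdsWithin_le_nhds
  obtain ⟨s, hs, hs0⟩ := ((ht.eventually h1).and self_mem_nhdsWithin).exists
  have hs0 : 0 < s := hs0
  simp only [add_sub_cancel_left, inner_smul_right, real_inner_self_eq_norm_sq, norm_smul,
    Real.norm_eq_abs, abs_of_pos hs0] at hs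
  have : 0 < s * ‖v‖ * ‖v‖ := by positivity
  nlinarith

lemma tendsto_pl2 {H α : Type*} [NormedAddCommGroup H] [InnerProductSpace ℝ H] {L : Filter α}
    {g : α → H} {r : α → ℝ} {g0 : H} {r0 : ℝ} (hg : Tendsto g L (𝓝 g0)) (hr : Tendsto r L (𝓝 r0)) :
    Tendsto (fun k => pl2 (g k) (r k)) L (𝓝 (pl2 g0 r0)) := by
  have : Continuous (fun p : H × ℝ => pl2 p.1 p.2) := WithLp.prod_continuous_toLp 2 H ℝ
  exact (this.tendsto (g0, r0)).comp (hg.prodMk_nhds hr)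

lemma RegSub.normal {n : ℕ} {φ : Eu n → ℝ} {x v : Eu n} (h : RegSub φ x v) :
    pl2 v (-1) ∈ regNormal (epigraphSet φ) (pl2 x (φ x)) := by
  refine ⟨by simp [epigraphSet, pl2], ?_⟩
  rintro d ⟨-, dk, tk, hd, ht, ht0, hk⟩
  have hd1 : Tendsto (fun k => (dk k).fst) atTop (𝓝 d.fst) :=
    ((WithLp.prod_continuous_ofLp 2 (Eu n) ℝ).fst.tendsto d).comp hd
  have hd2 : Tendsto (fun k => (dk k).snd) atTop (𝓝 d.snd) :=
    ((WithLp.prod_continuous_ofLp 2 (Eu n) ℝ).snd.tendsto d).comp hd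
  have hin : ⟪d, pl2 v (-1)⟫ = ⟪v, d.fst⟫ - d.snd := by
    simp [pl2, WithLp.prod_inner_apply, real_inner_comm]
    ring
  rw [hin]
  have hk' : ∀ k, φ (x + tk k • (dk k).fst) ≤ φ x + tk k * (dk k).snd := by
    intro k
    simpa [epigraphSet, pl2] using hk k
  have hxk : Tendsto (fun k => x + tk k • (dk k).fst) atTop (𝓝 x) := by
    simpa using tendsto_const_nhds.add (ht0.smul hd1)
  have key : ∀ ε > 0, ⟪v, d.fst⟫ - d.snd ≤ ε * ‖d.fst‖ := by
    intro ε hε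
    have hlim : Tendsto (fun k => ⟪v, (dk k).fst⟫ - (dk k).snd - ε * ‖(dk k).fst‖) atTop
        (𝓝 (⟪v, d.fst⟫ - d.snd - ε * ‖d.fst‖)) :=
      ((tendsto_const_nhds.inner hd1).sub hd2).sub (tendsto_const_nhds.mul hd1.norm)
    have := le_of_tendsto hlim (b := 0) (by
      filter_upwards [hxk.eventually (h ε hε)] with k hk1
      have h2 := hk' k
      have h3 := ht k
      simp only [add_sub_cancel_left, inner_smul_right, norm_smul, Real.norm_eq_abs,
        abs_of_pos h3] at hk1
      by_contra! hc
      have := mul_pos h3 hc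
      nlinarith)
    linarith
  by_contra! hc
  have h1 := key ((⟪v, d.fst⟫ - d.snd) / (2 * (‖d.fst‖ + 1))) (by positivity)
  have h4 : ‖d.fst‖ / (2 * (‖d.fst‖ + 1)) < 1 := by
    rw [div_lt_one (by positivity)]
    linarith [norm_nonneg d.fst]
  have h5 : (⟪v, d.fst⟫ - d.snd) / (2 * (‖d.fst‖ + 1)) * ‖d.fst‖
     = (⟪v, d.fst⟫ - d.snd) * (‖d.fst‖ / (2 * (‖d.fst‖ + 1))) := by ring
  rw [h5] at h1
  nlinarith

lemma regNormal_sub_lim {H : Type*} [NormedAddCommGroup H] [InnerProductSpace ℝ H]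
    {Ω : Set H} {x η : H} (h : η ∈ regNormal Ω x) : η ∈ limNormal Ω x :=
  ⟨h.1, fun _ => x, fun _ => η, tendsto_const_nhds, tendsto_const_nhds, fun _ => h⟩

lemma RegSub.lim {n : ℕ} {φ : Eu n → ℝ} {x v : Eu n} (h : RegSub φ x v) :
    v ∈ limSubdiff φ x := regNormal_sub_lim h.normal

lemma dirLimNormal_zero {H : Type*} [NormedAddCommGroup H] [InnerProductSpace ℝ H]
    (Ω : Set H) (x : H) : dirLimNormal Ω x 0 = limNormal Ω x := by
  ext η
  constructor
  · rintro ⟨hx, dk, tk, ηk, hd, ht, ht0, hη, hk⟩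
    refine ⟨hx, fun k => x + tk k • dk k, ηk, ?_, hη, hk⟩
    simpa using tendsto_const_nhds.add (ht0.smul hd)
  · rintro ⟨hx, xk, ηk, hxk, hη, hk⟩
    have hN : Tendsto (fun k => ‖xk k - x‖) atTop (𝓝 0) := by
      simpa using (hxk.sub_const x).norm
    have hS : Tendsto (fun k => Real.sqrt ‖xk k - x‖) atTop (𝓝 0) := by
      simpa using hN.sqrt
    have hone : Tendsto (fun k : ℕ => 1 / ((k:ℝ) + 1)) atTop (𝓝 0) :=
      tendsto_one_div_add_atTop_nhds_zero_nat
    have htp : ∀ k : ℕ, 0 < Real.sqrt ‖xk k - x‖ + 1 / ((k:ℝ) + 1) := fun k => by positivity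
    refine ⟨hx, fun k => (Real.sqrt ‖xk k - x‖ + 1 / ((k:ℝ) + 1))⁻¹ • (xk k - x),
      fun k => Real.sqrt ‖xk k - x‖ + 1 / ((k:ℝ) + 1), ηk, ?_, htp, ?_, hη, ?_⟩
    · rw [tendsto_zero_iff_norm_tendsto_zero]
      refine squeeze_zero (fun _ => norm_nonneg _) (fun k => ?_) hS
      rw [norm_smul, norm_inv, Real.norm_eq_abs, abs_of_pos (htp k), inv_mul_le_iff₀ (htp k)]
      have h1 := Real.mul_self_sqrt (norm_nonneg (xk k - x))
      have h2 : 0 ≤ 1 / ((k:ℝ) + 1) * Real.sqrt ‖xk k - x‖ := by positivity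
      nlinarith
    · simpa using hS.add hone
    · intro k
      rw [smul_inv_smul₀ (htp k).ne']
      simpa using hk k

lemma dirLimSubdiff_zero {n : ℕ} (φ : Eu n → ℝ) (x : Eu n) :
    dirLimSubdiff φ x 0 0 = limSubdiff φ x := by
  have : pl2 (0 : Eu n) 0 = 0 := rfl
  simp [dirLimSubdiff, limSubdiff, this, dirLimNormal_zero]

lemma dirDeriv_zero {n l : ℕ} {F : Eu n → Eu l} {F' : Eu n → Eu n → Eu l}
    (h : IsDirDeriv F F') (x : Eu n) : F' x 0 = 0 := by
  have := h x 0
  simp at this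
  exact this.symm

lemma zero_mem_dirLimSubdiff_zero {n : ℕ} (x d : Eu n) :
    (0 : Eu n) ∈ dirLimSubdiff (fun _ => (0:ℝ)) x d 0 := by
  have hR : ∀ z : Eu n, RegSub (fun _ => (0:ℝ)) z 0 := by
    intro z ε hε
    refine Eventually.of_forall fun y => ?_
    have := mul_nonneg hε.le (norm_nonneg (y - z))
    simpa using this
  refine ⟨by simp [epigraphSet, pl2], fun _ => pl2 d 0, fun k => 1 / ((k:ℝ) + 1),
    fun _ => pl2 0 (-1), tendsto_const_nhds, fun k => by positivity,
    tendsto_one_div_add_atTop_nhds_zero_nat, tendsto_const_nhds, fun k => ?_⟩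
  have := (hR (x + (1 / ((k:ℝ) + 1)) • d)).normal
  convert this using 2
  simp [pl2]
  apply (WithLp.equiv 2 (Eu n × ℝ)).injective
  simp

lemma limSubdiff_nonempty {n : ℕ} {φ : Eu n → ℝ} (hφ : LocallyLipschitz φ) (x : Eu n) :
    (limSubdiff φ x).Nonempty := by
  obtain ⟨K, U, hU, hK⟩ := hφ x
  obtain ⟨r, hr, hrU⟩ := Metric.nhds_basis_closedBall.mem_iff.mp hU
  have hex : ∀ m : ℕ, ∃ z ∈ closedBall x r, ∀ y ∈ closedBall x r,
      φ z + (m + 1) * ‖z - x‖^2 ≤ φ y + (m + 1) * ‖y - x‖^2 := by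
    intro m
    obtain ⟨z, hz, hz'⟩ := (isCompact_closedBall x r).exists_isMinOn
      ⟨x, mem_closedBall_self hr.le⟩ (f := fun y => φ y + (m + 1) * ‖y - x‖^2)
      ((hφ.continuous.add (by fun_prop)).continuousOn)
    exact ⟨z, hz, fun y hy => hz' hy⟩
  choose z hz hmin using hex
  have hzK : ∀ m, (m + 1) * ‖z m - x‖ ≤ K := by
    intro m
    by_cases h0 : ‖z m - x‖ = 0
    · rw [h0]; simp
    have hpos : 0 < ‖z m - x‖ := lt_of_le_of_ne (norm_nonneg _) (Ne.symm h0)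
    have h1 := hmin m x (mem_closedBall_self hr.le)
    have h2 := hK.dist_le_mul _ (hrU (hz m)) _ (hrU (mem_closedBall_self hr.le))
    rw [Real.dist_eq, dist_eq_norm] at h2
    have h3 := neg_le_of_abs_le h2
    simp only [sub_self, norm_zero] at h1
    have : ((m + 1) * ‖z m - x‖) * ‖z m - x‖ ≤ K * ‖z m - x‖ := by nlinarith
    exact le_of_mul_le_mul_right this hpos
  have hzlim : Tendsto z atTop (𝓝 x) := by
    rw [tendsto_iff_norm_sub_tendsto_zero]
    refine squeeze_zero (fun _ => norm_nonneg _) (fun m => ?_)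
      (g := fun m : ℕ => K * (1 / ((m:ℝ) + 1))) ?_
    · rw [mul_one_div, le_div_iff₀ (by positivity), mul_comm]
      exact hzK m
    · simpa using tendsto_one_div_add_atTop_nhds_zero_nat.const_mul (K:ℝ)
  have hvb : ∀ m : ℕ, (-(2 * ((m:ℝ) + 1))) • (z m - x) ∈ closedBall (0 : Eu n) (2 * K) := by
    intro m
    rw [mem_closedBall_zero_iff, norm_smul, norm_neg, Real.norm_eq_abs,
      abs_of_pos (by positivity)]
    nlinarith [hzK m]
  obtain ⟨v, -, ψ, hψ, hv⟩ := (isCompact_closedBall (0 : Eu n) (2 * K)).tendsto_subseq hvb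
  have hzi : ∀ᶠ m in atTop, z m ∈ ball x r := hzlim.eventually (ball_mem_nhds x hr)
  obtain ⟨N, hN⟩ := eventually_atTop.mp (hψ.tendsto_atTop.eventually hzi)
  refine ⟨v, by simp [epigraphSet, pl2], fun k => pl2 (z (ψ (k + N))) (φ (z (ψ (k + N)))),
    fun k => pl2 ((-(2 * ((ψ (k + N) : ℕ) + 1 : ℝ))) • (z (ψ (k + N)) - x)) (-1), ?_, ?_, ?_⟩
  · have hs : Tendsto (fun k => z (ψ (k + N))) atTop (𝓝 x) :=
      hzlim.comp (hψ.tendsto_atTop.comp (tendsto_add_atTop_nat N))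
    exact tendsto_pl2 hs ((hφ.continuous.tendsto x).comp hs)
  · exact tendsto_pl2 (hv.comp (tendsto_add_atTop_nat N)) tendsto_const_nhds
  · intro k
    apply RegSub.normal
    generalize hq : ψ (k + N) = m
    have hm : z m ∈ ball x r := hq ▸ hN (k + N) (by omega)
    intro ε hε
    have hb1 : ∀ᶠ y in 𝓝 (z m), y ∈ ball x r := isOpen_ball.mem_nhds hm
    have hb2 : ∀ᶠ y in 𝓝 (z m), y ∈ ball (z m) (ε / (m + 1)) :=
      ball_mem_nhds _ (by positivity)
    filter_upwards [hb1, hb2] with y hy1 hy2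
    have h1 := hmin m y (ball_subset_closedBall hy1)
    rw [mem_ball, dist_eq_norm, lt_div_iff₀ (by positivity)] at hy2
    have h3 : ‖y - x‖^2 = ‖z m - x‖^2 + 2 * ⟪z m - x, y - z m⟫ + ‖y - z m‖^2 := by
      rw [← norm_add_sq_real]; congr 2; abel
    rw [inner_smul_left]
    simp only [conj_trivial]
    have h4 := mul_le_mul_of_nonneg_right hy2.le (norm_nonneg (y - z m))
    rw [h3] at h1
    nlinarith


lemma penalty {n l : ℕ} {f : Eu n → ℝ} (hf : ContDiff ℝ 1 f) {F : Eu n → Eu l}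
    (hLip : LocallyLipschitz F) {Γ : Set (Eu l)} (hΓ : IsClosed Γ) {x : Eu n} {r : ℝ}
    (hmin : ∀ y ∈ closedBall x r, F y ∈ Γ → f x ≤ f y) {w : Eu n} (hw : F w ∈ Γ)
    {t η : ℝ} (ht : 0 < t) (hη : 0 < η) (hfw : f w ≤ f x + η * t)
    (hwr : ‖w - x‖ + Real.sqrt (2 * η) * t < r) :
    ∃ (x' : Eu n) (δ : Eu l) (m : ℝ), 0 < m ∧ F x' - δ ∈ Γ ∧ (∀ y ∈ Γ, ‖δ‖ ≤ ‖F x' - y‖) ∧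
      ‖x' - w‖ ≤ Real.sqrt (2 * η) * t ∧ m * ‖δ‖^2 ≤ 4 * η * t ∧ ‖δ‖^2 ≤ 4 * η * t^2 ∧
      RegSub (fun y => ⟪m • δ, F y⟫) x' (-((2 / t) • (x' - w)) - gradient f x') := by
  have hFc := hLip.continuous
  have hfc := hf.continuous
  have hne : Γ.Nonempty := ⟨_, hw⟩
  have hwb : w ∈ closedBall x r := by
    rw [mem_closedBall, dist_eq_norm]
    have : 0 ≤ Real.sqrt (2 * η) * t := by positivity
    linarith
  have hdc : Continuous (fun y => infDist (F y) Γ) := (continuous_infDist_pt Γ).comp hFc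
  -- lower bound of f on the ball
  obtain ⟨zB, hzB, hB⟩ := (isCompact_closedBall x r).exists_isMinOn ⟨w, hwb⟩ hfc.continuousOn
  -- choose m
  obtain ⟨m, hm, hmt, hmC⟩ : ∃ m : ℝ, 0 < m ∧ 1 / t ≤ m ∧ ∀ y ∈ closedBall x r,
      f y ≤ f x - η * t → f w - f zB < m / 2 * infDist (F y) Γ ^ 2 := by
    let C := closedBall x r ∩ {y | f y ≤ f x - η * t}
    have hC : IsCompact C :=
      (isCompact_closedBall x r).inter_right (isClosed_le hfc continuous_const)
    rcases C.eq_empty_or_nonempty with h0 | h0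
    · refine ⟨1 / t, by positivity, le_rfl, fun y hy hy' => ?_⟩
      have : y ∈ C := ⟨hy, hy'⟩
      simp [h0] at this
    · obtain ⟨c, hc, hcm⟩ := hC.exists_isMinOn h0 hdc.continuousOn
      have hcpos : 0 < infDist (F c) Γ := by
        rw [← hΓ.notMem_iff_infDist_pos hne]
        intro hcc
        have h1 := hmin c hc.1 hcc
        have h2 : f c ≤ f x - η * t := hc.2
        have : 0 < η * t := by positivity
        linarith
      have hq : 0 < infDist (F c) Γ ^ 2 := by positivity
      refine ⟨1 / t + 2 * (|f w - f zB| + 1) / infDist (F c) Γ ^ 2, by positivity, ?_, ?_⟩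
      · have : 0 ≤ 2 * (|f w - f zB| + 1) / infDist (F c) Γ ^ 2 := by positivity
        linarith
      · intro y hy hy'
        have h1 : infDist (F c) Γ ≤ infDist (F y) Γ := hcm (show y ∈ C from ⟨hy, hy'⟩)
        have h2 : infDist (F c) Γ ^ 2 ≤ infDist (F y) Γ ^ 2 := by gcongr
        calc f w - f zB < |f w - f zB| + 1 := by linarith [le_abs_self (f w - f zB)]
          _ = (2 * (|f w - f zB| + 1) / infDist (F c) Γ ^ 2) / 2 * infDist (F c) Γ ^ 2 := by
              field_simp
          _ ≤ (1 / t + 2 * (|f w - f zB| + 1) / infDist (F c) Γ ^ 2) / 2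
                * infDist (F y) Γ ^ 2 := by
              gcongr
              have : 0 < 1 / t := by positivity
              linarith
  -- minimiser
  obtain ⟨x', hx', hx'min⟩ := (isCompact_closedBall x r).exists_isMinOn ⟨w, hwb⟩
    (f := fun y => f y + 1 / t * ‖y - w‖^2 + m / 2 * infDist (F y) Γ ^ 2)
    (((hfc.add (by fun_prop)).add ((hdc.pow 2).const_mul (m/2) |>.congr (fun _ => rfl))).continuousOn)
  have hx'min' : ∀ y ∈ closedBall x r, f x' + 1 / t * ‖x' - w‖^2 + m / 2 * infDist (F x') Γ ^ 2
      ≤ f y + 1 / t * ‖y - w‖^2 + m / 2 * infDist (F y) Γ ^ 2 := fun y hy => hx'min hy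
  obtain ⟨y', hy', hyd⟩ := hΓ.exists_infDist_eq_dist hne (F x')
  rw [dist_eq_norm] at hyd
  have h0 := hx'min' w hwb
  have hw0 : infDist (F w) Γ = 0 := infDist_zero_of_mem hw
  rw [hw0] at h0
  simp only [sub_self, norm_zero] at h0
  have hpos1 : 0 ≤ 1 / t * ‖x' - w‖^2 := by positivity
  have hpos2 : 0 ≤ m / 2 * infDist (F x') Γ ^ 2 := by positivity
  have hfx' : f x - η * t < f x' := by
    by_contra! hc
    have h1 := hmC x' hx' hc
    have h2 : f zB ≤ f x' := hB hx'
    linarith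
  have hb1 : 1 / t * ‖x' - w‖^2 + m / 2 * infDist (F x') Γ ^ 2 ≤ 2 * η * t := by linarith
  have hxw : ‖x' - w‖ ≤ Real.sqrt (2 * η) * t := by
    have h1 : 1 / t * ‖x' - w‖^2 ≤ 2 * η * t := by linarith
    rw [one_div, inv_mul_le_iff₀ ht] at h1
    refine (pow_le_pow_iff_left₀ (norm_nonneg _) (by positivity) two_ne_zero).mp ?_
    rw [mul_pow, Real.sq_sqrt (by positivity)]
    nlinarith
  have hmD : m * infDist (F x') Γ ^ 2 ≤ 4 * η * t := by linarith
  refine ⟨x', F x' - y', m, hm, by simpa using hy', ?_, hxw, ?_, ?_, ?_⟩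
  · intro y hy
    rw [← hyd, ← dist_eq_norm]
    exact infDist_le_dist_of_mem hy
  · rw [← hyd]; exact hmD
  · rw [← hyd]
    have h1 : 1 / t * infDist (F x') Γ ^ 2 ≤ 4 * η * t :=
      le_trans (by gcongr) hmD
    rw [one_div, inv_mul_le_iff₀ ht] at h1
    nlinarith
  · intro ε hε
    have hint : x' ∈ ball x r := by
      rw [mem_ball, dist_eq_norm]
      have : ‖x' - x‖ ≤ ‖x' - w‖ + ‖w - x‖ := by
        simpa using norm_add_le (x' - w) (w - x)
      linarith
    obtain ⟨K, U, hU, hK⟩ := hLip x'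
    have hgrad : HasGradientAt f (gradient f x') x' :=
      ((hf.differentiable (by norm_num)) x').hasGradientAt
    have hlo := (hasFDerivAt_iff_isLittleO.mp hgrad.hasFDerivAt).def (half_pos hε)
    have hcpos : 0 < 1 / t + m / 2 * K^2 := by positivity
    have hb2 : ∀ᶠ y in 𝓝 x', y ∈ ball x' (ε / 2 / (1 / t + m / 2 * K^2)) :=
      ball_mem_nhds _ (by positivity)
    have hb3 : ∀ᶠ y in 𝓝 x', y ∈ ball x r := isOpen_ball.mem_nhds hint
    filter_upwards [hlo, hb2, hb3, hU] with y hy1 hy2 hy3 hy4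
    have e1 := hx'min' y (ball_subset_closedBall hy3)
    have e2 : infDist (F y) Γ ≤ ‖F y - y'‖ := by
      rw [← dist_eq_norm]; exact infDist_le_dist_of_mem hy'
    have e3 : infDist (F y) Γ ^ 2 ≤ ‖F y - y'‖ ^ 2 := by
      have := infDist_nonneg (x := F y) (s := Γ)
      gcongr
    have e4 : ‖F y - y'‖ ^ 2 = ‖F x' - y'‖^2 + 2 * ⟪F x' - y', F y - F x'⟫ + ‖F y - F x'‖^2 := by
      rw [← norm_add_sq_real]; congr 2; abel
    have e5 : ‖y - w‖^2 = ‖x' - w‖^2 + 2 * ⟪x' - w, y - x'⟫ + ‖y - x'‖^2 := by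
      rw [← norm_add_sq_real]; congr 2; abel
    have e6 : ‖F y - F x'‖ ≤ K * ‖y - x'‖ := by
      have := hK.dist_le_mul _ hy4 _ (mem_of_mem_nhds hU)
      rwa [dist_eq_norm, dist_eq_norm] at this
    have e7 : ‖F y - F x'‖^2 ≤ K^2 * ‖y - x'‖^2 := by
      rw [← mul_pow]; gcongr
    have e8 : f y - f x' - ⟪gradient f x', y - x'⟫ ≤ ε / 2 * ‖y - x'‖ := by
      have := le_trans (le_abs_self _) hy1
      simpa using this
    rw [mem_ball, dist_eq_norm, lt_div_iff₀ hcpos] at hy2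
    have e9 := mul_le_mul_of_nonneg_right hy2.le (norm_nonneg (y - x'))
    have e10 : ⟪m • (F x' - y'), F y⟫ - ⟪m • (F x' - y'), F x'⟫
        = m * ⟪F x' - y', F y - F x'⟫ := by
      rw [← inner_sub_right, inner_smul_left]; simp
    have e11 : ⟪-((2 / t) • (x' - w)) - gradient f x', y - x'⟫
        = -(2 * (1/t) * ⟪x' - w, y - x'⟫) - ⟪gradient f x', y - x'⟫ := by
      rw [inner_sub_left, inner_neg_left, inner_smul_left]
      simp only [conj_trivial]; ring
    rw [hyd, e5] at e1
    rw [e4] at e3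
    have e12 := mul_le_mul_of_nonneg_left e3 (half_pos hm).le
    have e13 := mul_le_mul_of_nonneg_left e7 (half_pos hm).le
    show ⟪m • (F x' - y'), F x'⟫ + _ - _ ≤ ⟪m • (F x' - y'), F y⟫
    rw [e11]
    clear hx'min' hmC hmin hx'min hB
    linarith

/-- Combinatorial description of regular normals to a union of boxes. -/
def BoxN {l t : ℕ} (a b : Fin t → Fin l → EReal) (y η : Eu l) : Prop :=
  y ∈ GammaODP a b ∧ ∀ j, y ∈ GammaJ a b j → ∀ i,
    (0 < η i → ((y i : ℝ) : EReal) = b j i) ∧ (η i < 0 → ((y i : ℝ) : EReal) = a j i)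

/-- Active indices at a point of the union of boxes. -/
def actSet {l t : ℕ} (a b : Fin t → Fin l → EReal) (y : Eu l) : Set (Fin l) :=
  {i | ∃ j, y ∈ GammaJ a b j ∧ (((y i : ℝ) : EReal) = a j i ∨ ((y i : ℝ) : EReal) = b j i)}

lemma isClosed_GammaJ {l t : ℕ} (a b : Fin t → Fin l → EReal) (j : Fin t) :
    IsClosed (GammaJ a b j) := by
  have : GammaJ a b j = ⋂ i, {y : Eu l | a j i ≤ ((y i : ℝ) : EReal) ∧ ((y i : ℝ) : EReal) ≤ b j i} := by
    ext; simp [GammaJ]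
  rw [this]
  refine isClosed_iInter fun i => ?_
  have hc : Continuous (fun y : Eu l => ((y i : ℝ) : EReal)) :=
    continuous_coe_real_ereal.comp (by fun_prop)
  exact (isClosed_le continuous_const hc).inter (isClosed_le hc continuous_const)

lemma isClosed_GammaODP {l t : ℕ} (a b : Fin t → Fin l → EReal) :
    IsClosed (GammaODP a b) := isClosed_iUnion_of_finite (isClosed_GammaJ a b)

lemma eventually_J {l t : ℕ} (a b : Fin t → Fin l → EReal) (y : Eu l) :
    ∀ᶠ z in 𝓝 y, ∀ j, z ∈ GammaJ a b j → y ∈ GammaJ a b j := by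
  rw [eventually_all]
  intro j
  by_cases h : y ∈ GammaJ a b j
  · simp [h]
  · filter_upwards [(isClosed_GammaJ a b j).isOpen_compl.mem_nhds h] with z hz hz'
    exact absurd hz' hz

lemma eventually_ne_end {l : ℕ} (y : Eu l) (i : Fin l) (c : EReal) :
    ∀ᶠ z in 𝓝 y, ((z i : ℝ) : EReal) = c → ((y i : ℝ) : EReal) = c := by
  by_cases h : ((y i : ℝ) : EReal) = c
  · simp [h]
  · have hc : Continuous (fun y : Eu l => ((y i : ℝ) : EReal)) :=
      continuous_coe_real_ereal.comp (by fun_prop)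
    filter_upwards [hc.continuousAt.eventually_ne h] with z hz hz'
    exact absurd hz' hz

lemma eventually_act {l t : ℕ} (a b : Fin t → Fin l → EReal) (y : Eu l) :
    ∀ᶠ z in 𝓝 y, actSet a b z ⊆ actSet a b y := by
  have h1 : ∀ᶠ z in 𝓝 y, ∀ j i, ((z i : ℝ) : EReal) = a j i → ((y i : ℝ) : EReal) = a j i := by
    simp only [eventually_all]; exact fun j i => eventually_ne_end y i _
  have h2 : ∀ᶠ z in 𝓝 y, ∀ j i, ((z i : ℝ) : EReal) = b j i → ((y i : ℝ) : EReal) = b j i := by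
    simp only [eventually_all]; exact fun j i => eventually_ne_end y i _
  filter_upwards [eventually_J a b y, h1, h2] with z hz h1 h2
  rintro i ⟨j, hj, h⟩
  exact ⟨j, hz j hj, h.imp (h1 j i) (h2 j i)⟩

lemma BoxN.reg {l t : ℕ} {a b : Fin t → Fin l → EReal} {y η : Eu l} (h : BoxN a b y η) :
    η ∈ regNormal (GammaODP a b) y := by
  refine ⟨h.1, ?_⟩
  rintro d ⟨-, dk, tk, hd, ht, ht0, hk⟩
  have hyk : Tendsto (fun k => y + tk k • dk k) atTop (𝓝 y) := by
    simpa using tendsto_const_nhds.add (ht0.smul hd)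
  refine le_of_tendsto (hd.inner tendsto_const_nhds) ?_
  filter_upwards [hyk.eventually (eventually_J a b y)] with k hJ
  obtain ⟨j, hj⟩ := mem_iUnion.mp (hk k)
  have hyj := hJ j hj
  rw [PiLp.inner_apply]
  refine Finset.sum_nonpos fun i _ => ?_
  have h1 := hj i
  have h2 := h.2 j hyj i
  have h3 := ht k
  simp only [RCLike.inner_apply, conj_trivial]
  rcases lt_trichotomy (η i) 0 with h0 | h0 | h0
  · rw [← h2.2 h0] at h1
    have h4 := EReal.coe_le_coe_iff.mp h1.1
    simp at h4
    have : 0 ≤ dk k i := nonneg_of_mul_nonneg_right h4 h3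
    nlinarith
  · simp [h0]
  · rw [← h2.1 h0] at h1
    have h4 := EReal.coe_le_coe_iff.mp h1.2
    simp at h4
    have : dk k i ≤ 0 := by
      by_contra! hc
      have := mul_pos h3 hc
      linarith
    nlinarith

lemma tendsto_move {l : ℕ} (y : Eu l) (i : Fin l) (c : ℝ) :
    Tendsto (fun s : ℝ => y + (c * s) • EuclideanSpace.single i (1:ℝ)) (𝓝[>] 0) (𝓝 y) := by
  have : Tendsto (fun s : ℝ => y + (c * s) • EuclideanSpace.single i (1:ℝ)) (𝓝 0)
      (𝓝 (y + (c * 0) • EuclideanSpace.single i (1:ℝ))) := by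
    apply Continuous.tendsto; fun_prop
  simp only [mul_zero, zero_smul, add_zero] at this
  exact this.mono_left nhdsWithin_le_nhds

lemma move_apply {l : ℕ} (y : Eu l) (i k : Fin l) (s : ℝ) :
    (y + s • EuclideanSpace.single i (1:ℝ)) k = if k = i then y i + s else y k := by
  by_cases h : k = i
  · subst h; simp
  · simp [h]

lemma move_up_mem {l t : ℕ} {a b : Fin t → Fin l → EReal} {y : Eu l} {j : Fin t}
    (hy : y ∈ GammaJ a b j) {i : Fin l} (hi : ((y i : ℝ) : EReal) ≠ b j i) :
    ∀ᶠ s : ℝ in 𝓝[>] 0, y + (1 * s) • EuclideanSpace.single i (1:ℝ) ∈ GammaJ a b j := by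
  have hlt : ((y i : ℝ) : EReal) < b j i := lt_of_le_of_ne (hy i).2 hi
  have hc : Continuous (fun y : Eu l => ((y i : ℝ) : EReal)) :=
    continuous_coe_real_ereal.comp (by fun_prop)
  have h1 : ∀ᶠ z in 𝓝 y, ((z i : ℝ) : EReal) < b j i :=
    hc.continuousAt.eventually_lt continuousAt_const hlt
  filter_upwards [(tendsto_move y i 1).eventually h1, self_mem_nhdsWithin] with s hs hs0 k
  have hs0 : 0 < s := hs0
  by_cases hk : k = i
  · subst hk
    refine ⟨?_, hs.le⟩
    rw [move_apply, if_pos rfl]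
    exact (hy k).1.trans (EReal.coe_le_coe_iff.mpr (by linarith))
  · rw [move_apply, if_neg hk]; exact hy k

lemma move_down_mem {l t : ℕ} {a b : Fin t → Fin l → EReal} {y : Eu l} {j : Fin t}
    (hy : y ∈ GammaJ a b j) {i : Fin l} (hi : ((y i : ℝ) : EReal) ≠ a j i) :
    ∀ᶠ s : ℝ in 𝓝[>] 0, y + ((-1) * s) • EuclideanSpace.single i (1:ℝ) ∈ GammaJ a b j := by
  have hlt : a j i < ((y i : ℝ) : EReal) := lt_of_le_of_ne (hy i).1 hi.symm
  have hc : Continuous (fun y : Eu l => ((y i : ℝ) : EReal)) :=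
    continuous_coe_real_ereal.comp (by fun_prop)
  have h1 : ∀ᶠ z in 𝓝 y, a j i < ((z i : ℝ) : EReal) :=
    continuousAt_const.eventually_lt hc.continuousAt hlt
  filter_upwards [(tendsto_move y i (-1)).eventually h1, self_mem_nhdsWithin] with s hs hs0 k
  have hs0 : 0 < s := hs0
  by_cases hk : k = i
  · subst hk
    refine ⟨hs.le, ?_⟩
    rw [move_apply, if_pos rfl]
    exact (EReal.coe_le_coe_iff.mpr (by linarith)).trans (hy k).2
  · rw [move_apply, if_neg hk]; exact hy k

lemma proj_ineq {l : ℕ} {δ : Eu l} {i : Fin l} {c : ℝ} (hc : c^2 = 1)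
    (h : ∀ᶠ s : ℝ in 𝓝[>] 0, ‖δ‖ ≤ ‖δ - (c * s) • EuclideanSpace.single i (1:ℝ)‖) :
    c * δ i ≤ 0 := by
  have h2 : ∀ᶠ s : ℝ in 𝓝[>] 0, 2 * (c * δ i) ≤ s := by
    filter_upwards [h, self_mem_nhdsWithin] with s hs hs0
    have hs0 : 0 < s := hs0
    have h3 : ‖δ‖^2 ≤ ‖δ - (c * s) • EuclideanSpace.single i (1:ℝ)‖^2 := by gcongr
    rw [norm_sub_sq_real, inner_smul_right, norm_smul, EuclideanSpace.inner_single_right,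
      PiLp.norm_single] at h3
    simp only [Real.norm_eq_abs, mul_pow, sq_abs, hc, conj_trivial] at h3
    have : 0 ≤ s * (s - 2 * (c * δ i)) := by
      simp at h3
      nlinarith
    have := nonneg_of_mul_nonneg_right this hs0
    linarith
  have h3 : Tendsto (fun s : ℝ => s) (𝓝[>] 0) (𝓝 0) := tendsto_id.mono_left nhdsWithin_le_nhds
  have := ge_of_tendsto h3 h2
  linarith

lemma BoxN.of_proj {l t : ℕ} {a b : Fin t → Fin l → EReal} {z δ : Eu l} {m : ℝ} (hm : 0 < m)
    (hy : z - δ ∈ GammaODP a b) (hp : ∀ y ∈ GammaODP a b, ‖δ‖ ≤ ‖z - y‖) :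
    BoxN a b (z - δ) (m • δ) := by
  refine ⟨hy, fun j hj i => ⟨fun h => ?_, fun h => ?_⟩⟩
  · by_contra hne
    have h1 : 0 < δ i := by
      simp at h
      by_contra! hc
      nlinarith
    have := proj_ineq (δ := δ) (i := i) (c := 1) (by norm_num) (by
      filter_upwards [move_up_mem hj hne] with s hs
      have := hp _ (mem_iUnion.mpr ⟨j, hs⟩)
      convert this using 2
      abel)
    linarith
  · by_contra hne
    have h1 : δ i < 0 := by
      simp at h
      by_contra! hc
      nlinarith
    have := proj_ineq (δ := δ) (i := i) (c := -1) (by norm_num) (by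
      filter_upwards [move_down_mem hj hne] with s hs
      have := hp _ (mem_iUnion.mpr ⟨j, hs⟩)
      convert this using 2
      abel)
    linarith

lemma box_perturb {l t : ℕ} {a b : Fin t → Fin l → EReal} {y lam : Eu l} (h : BoxN a b y lam)
    {r : ℝ} (hr : 0 < r) :
    ∃ y', ‖y' - y‖ < r ∧ BoxN a b y' lam ∧ ∀ i ∈ actSet a b y', lam i = 0 →
      ∀ j, y' ∈ GammaJ a b j → ((y' i : ℝ) : EReal) = b j i := by
  obtain ⟨y', ⟨hy1, hy2⟩, hmin⟩ := (measure (fun y' => (actSet a b y').ncard)).wf.has_min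
    {y' | ‖y' - y‖ < r ∧ BoxN a b y' lam} ⟨y, by simpa using hr, h⟩
  refine ⟨y', hy1, hy2, fun i hi hlam j hj => ?_⟩
  by_contra hne
  have hcl : ∀ᶠ z in 𝓝 y', ‖z - y‖ < r :=
    (continuous_id.sub continuous_const).norm.continuousAt.eventually_lt continuousAt_const hy1
  have hend : ∀ c : EReal, ∀ᶠ s : ℝ in 𝓝[>] 0, ((y' i + s : ℝ) : EReal) ≠ c := by
    intro c
    by_cases hc : ∃ s0 : ℝ, 0 < s0 ∧ ((y' i + s0 : ℝ) : EReal) = c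
    · obtain ⟨s0, hs0, rfl⟩ := hc
      filter_upwards [Ioo_mem_nhdsGT hs0] with s hs he
      have := EReal.coe_eq_coe_iff.mp he
      linarith [hs.2]
    · filter_upwards [self_mem_nhdsWithin] with s hs he
      exact hc ⟨s, hs, he⟩
  have hend' : ∀ᶠ s : ℝ in 𝓝[>] 0, ∀ j, ((y' i + s : ℝ) : EReal) ≠ a j i ∧
      ((y' i + s : ℝ) : EReal) ≠ b j i := by
    rw [eventually_all]; exact fun j => (hend _).and (hend _)
  have htm := tendsto_move y' i 1
  obtain ⟨s, h1, h2, h3, h4⟩ := ((move_up_mem hj hne).and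
    ((htm.eventually hcl).and ((htm.eventually (eventually_J a b y')).and hend'))).exists
  simp only [one_mul] at h1 h2 h3
  refine hmin (y' + s • EuclideanSpace.single i (1:ℝ)) ⟨h2, mem_iUnion.mpr ⟨j, h1⟩, ?_⟩ ?_
  · intro j' hj' k
    rw [move_apply]
    by_cases hk : k = i
    · subst hk
      simp [hlam]
    · rw [if_neg hk]
      exact hy2.2 j' (h3 j' hj') k
  · show (actSet a b _).ncard < (actSet a b _).ncard
    refine ncard_lt_ncard ?_ (toFinite _)
    rw [ssubset_iff_of_subset]
    · refine ⟨i, hi, ?_⟩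
      rintro ⟨j', hj', h⟩
      rw [move_apply, if_pos rfl] at h
      exact h.elim (h4 j').1 (h4 j').2
    · rintro k ⟨j', hj', hh⟩
      rw [move_apply] at hh
      by_cases hk : k = i
      · subst hk; exact hi
      · rw [if_neg hk] at hh
        exact ⟨j', h3 j' hj', hh⟩

lemma scalSubdiff_eq {n l : ℕ} {F : Eu n → Eu l} {F' : Eu n → Eu n → Eu l}
    (hF' : IsDirDeriv F F') (hsum : SumRule F F') (lam : Eu l) (x : Eu n) :
    scalSubdiff F lam x = {v | ∃ s : Fin l → Eu n,
      (∀ i, s i ∈ |lam i| • limSubdiff (fun y => Real.sign (lam i) * F y i) x) ∧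
      v = ∑ i, s i} := by
  have h := hsum x 0 lam
  simp only [scalDirSubdiff, dirSumSet, dirDeriv_zero hF', inner_zero_right, PiLp.zero_apply,
    mul_zero, dirLimSubdiff_zero] at h
  exact h

lemma sub_perturb {n l : ℕ} {F : Eu n → Eu l} {F' : Eu n → Eu n → Eu l}
    (hLip : LocallyLipschitz F) (hF' : IsDirDeriv F F') (hsum : SumRule F F')
    {lam : Eu l} {x v : Eu n} (hv : v ∈ scalSubdiff F lam x) (S : Set (Fin l))
    (hS : ∀ i ∈ S, lam i = 0) {r : ℝ} (hr : 0 < r) :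
    ∃ lam' v', ‖lam' - lam‖ < r ∧ ‖v' - v‖ < r ∧ v' ∈ scalSubdiff F lam' x ∧
      (∀ i ∉ S, lam' i = lam i) ∧ ∀ i ∈ S, 0 < lam' i := by
  classical
  rw [scalSubdiff_eq hF' hsum] at hv
  obtain ⟨s, hs, rfl⟩ := hv
  have hne : ∀ i, (limSubdiff (fun y => (1:ℝ) * F y i) x).Nonempty := by
    intro i
    apply limSubdiff_nonempty
    have h1 : LocallyLipschitz (fun z : Eu l => z i) :=
      (EuclideanSpace.proj (𝕜 := ℝ) i : Eu l →L[ℝ] ℝ).lipschitz.locallyLipschitz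
    simp only [one_mul]
    exact h1.comp hLip
  choose ξ hξ using hne
  let e : Eu l := WithLp.toLp 2 (fun i => if i ∈ S then (1:ℝ) else 0)
  let w : Eu n := ∑ i, if i ∈ S then ξ i else 0
  let c : ℝ := r / (1 + ‖e‖ + ‖w‖)
  have hc : 0 < c := by positivity
  have hce : c * ‖e‖ < r := by
    have : c * (1 + ‖e‖ + ‖w‖) = r := div_mul_cancel₀ _ (by positivity)
    nlinarith [norm_nonneg e, norm_nonneg w, mul_nonneg hc.le (norm_nonneg w)]
  have hcw : c * ‖w‖ < r := by
    have : c * (1 + ‖e‖ + ‖w‖) = r := div_mul_cancel₀ _ (by positivity)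
    nlinarith [norm_nonneg e, norm_nonneg w, mul_nonneg hc.le (norm_nonneg e)]
  have h1 : ∀ i ∉ S, (lam + c • e) i = lam i := by
    intro i hi; simp [e, hi]
  have h2 : ∀ i ∈ S, (lam + c • e) i = c := by
    intro i hi; simp [e, hi, hS i hi]
  refine ⟨lam + c • e, ∑ i, s i + c • w, ?_, ?_, ?_, h1, ?_⟩
  · simpa [norm_smul, abs_of_pos hc] using hce
  · simpa [norm_smul, abs_of_pos hc] using hcw
  · rw [scalSubdiff_eq hF' hsum]
    refine ⟨fun i => if i ∈ S then c • ξ i else s i, fun i => ?_, ?_⟩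
    · beta_reduce
      by_cases hi : i ∈ S
      · rw [h2 i hi, if_pos hi, abs_of_pos hc, Real.sign_of_pos hc]
        exact smul_mem_smul_set (hξ i)
      · rw [h1 i hi, if_neg hi]; exact hs i
    · rw [Finset.smul_sum, ← Finset.sum_add_distrib]
      refine Finset.sum_congr rfl fun i _ => ?_
      by_cases hi : i ∈ S
      · have := hs i
        rw [hS i hi] at this
        obtain ⟨q, -, hq⟩ := this
        simp at hq
        simp [hi, ← hq]
      · simp [hi]
  · intro i hi; rw [h2 i hi]; exact hc

lemma perturb {n l t : ℕ} {F : Eu n → Eu l} {F' : Eu n → Eu n → Eu l}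
    (hLip : LocallyLipschitz F) (hF' : IsDirDeriv F F') (hsum : SumRule F F')
    {a b : Fin t → Fin l → EReal} {lam δ : Eu l} {x v : Eu n} (hv : v ∈ scalSubdiff F lam x)
    (hB : BoxN a b (F x - δ) lam) {r : ℝ} (hr : 0 < r) :
    ∃ δ' lam' v', ‖δ' - δ‖ < r ∧ ‖lam' - lam‖ < r ∧ ‖v' - v‖ < r ∧
      v' ∈ scalSubdiff F lam' x ∧ BoxN a b (F x - δ') lam' ∧
      ∀ i ∈ activeI F a b x δ', lam' i ≠ 0 := by
  obtain ⟨y', hy1, hy2, hy3⟩ := box_perturb hB hr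
  obtain ⟨lam', v', h1, h2, h3, h4, h5⟩ := sub_perturb hLip hF' hsum hv
    {i | i ∈ actSet a b y' ∧ lam i = 0} (fun i hi => hi.2) hr
  have hy : F x - (F x - y') = y' := by abel
  refine ⟨F x - y', lam', v', ?_, h1, h2, h3, ?_, ?_⟩
  · rw [← norm_neg]; convert hy1 using 1; congr 1; abel
  · rw [hy]
    refine ⟨hy2.1, fun j hj i => ?_⟩
    by_cases hi : i ∈ {i | i ∈ actSet a b y' ∧ lam i = 0}
    · have := h5 i hi
      exact ⟨fun _ => hy3 i hi.1 hi.2 j hj, fun h => absurd h this.not_gt⟩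
    · rw [h4 i hi]; exact hy2.2 j hj i
  · intro i hi
    have hi' : i ∈ actSet a b y' := by
      have : activeI F a b x (F x - y') = actSet a b (F x - (F x - y')) := rfl
      rw [this, hy] at hi
      exact hi
    by_cases h0 : lam i = 0
    · exact (h5 i ⟨hi', h0⟩).ne'
    · rw [h4 i (fun h => h0 h.2)]; exact h0

/-- The multiplier built from a sign pattern. -/
def mkMu {l : ℕ} (u lam : Eu l) : Eu l := WithLp.toLp 2 (fun i => u i * Real.sign (lam i))

lemma mkMu_box {l t : ℕ} {a b : Fin t → Fin l → EReal} {y lam lam' u : Eu l}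
    (h : BoxN a b y lam) (hu : ∀ i, 0 ≤ u i)
    (hs : ∀ i, u i ≠ 0 → (0 < lam' i → 0 < lam i) ∧ (lam' i < 0 → lam i < 0)) :
    BoxN a b y (mkMu u lam') := by
  refine ⟨h.1, fun j hj i => ?_⟩
  simp only [mkMu]
  by_cases hui : u i = 0
  · simp [hui]
  have hup : 0 < u i := lt_of_le_of_ne (hu i) (Ne.symm hui)
  rcases lt_trichotomy (lam' i) 0 with h0 | h0 | h0
  · rw [Real.sign_of_neg h0]
    exact ⟨fun h => by linarith, fun _ => (h.2 j hj i).2 ((hs i hui).2 h0)⟩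
  · simp [h0]
  · rw [Real.sign_of_pos h0]
    exact ⟨fun _ => (h.2 j hj i).1 ((hs i hui).1 h0), fun h => by linarith⟩

lemma qual_mem {n l : ℕ} {F : Eu n → Eu l} {F' : Eu n → Eu n → Eu l}
    (hsum : SumRule F F') {I : Set (Fin l)} {x d : Eu n} {u lam : Eu l}
    (hu : ∀ i, 0 ≤ u i) (huI : ∀ i ∉ I, u i = 0) (hlam : ∀ i ∈ I, lam i ≠ 0)
    {s : Fin l → Eu n}
    (hs : ∀ i ∈ I, s i ∈ u i • dirLimSubdiff (fun y => Real.sign (lam i) * F y i) x d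
            (Real.sign (lam i) * F' x d i))
    (h0 : (0 : Eu n) = ∑ i, I.indicator s i) :
    (0 : Eu n) ∈ scalDirSubdiff F F' (mkMu u lam) x d := by
  rw [hsum]
  refine ⟨fun i => I.indicator s i, fun i => ?_, h0⟩
  beta_reduce
  by_cases hui : u i = 0
  · have h1 : I.indicator s i = 0 := by
      by_cases hi : i ∈ I
      · obtain ⟨q, -, hq⟩ := hs i hi
        simp [hui] at hq
        simp [hi, ← hq]
      · simp [hi]
    have h2 : mkMu u lam i = 0 := by simp [mkMu, hui]
    rw [h1, h2]
    simp only [Real.sign_zero, zero_mul]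
    exact ⟨0, zero_mem_dirLimSubdiff_zero x d, by simp⟩
  · have hi : i ∈ I := by by_contra hi; exact hui (huI i hi)
    have hup : 0 < u i := lt_of_le_of_ne (hu i) (Ne.symm hui)
    rw [indicator_of_mem hi]
    have h3 := hs i hi
    rcases lt_or_gt_of_ne (hlam i hi) with h | h
    · have h4 : mkMu u lam i = - u i := by simp [mkMu, Real.sign_of_neg h]
      rw [h4, Real.sign_of_neg (by linarith), abs_neg, abs_of_pos hup]
      rwa [Real.sign_of_neg h] at h3
    · have h4 : mkMu u lam i = u i := by simp [mkMu, Real.sign_of_pos h]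
      rw [h4, Real.sign_of_pos hup, abs_of_pos hup]
      rwa [Real.sign_of_pos h] at h3

lemma mkMu_eq_zero {l : ℕ} {I : Set (Fin l)} {u lam : Eu l} (huI : ∀ i ∉ I, u i = 0)
    (hlam : ∀ i ∈ I, lam i ≠ 0) (h : mkMu u lam = 0) : u = 0 := by
  ext i
  by_cases hi : i ∈ I
  · have h1 : mkMu u lam i = 0 := by rw [h]; rfl
    simp only [mkMu, mul_eq_zero, Real.sign_eq_zero_iff] at h1
    exact h1.resolve_right (hlam i hi)
  · exact huI i hi

lemma extract_seq {P α : Type*} [Finite α] {Q : ℕ → P → Prop} (h : ∀ᶠ k in atTop, ∃ p, Q k p)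
    (g : P → α) : ∃ (φ : ℕ → ℕ) (p : ℕ → P) (c : α), Tendsto φ atTop atTop ∧
      (∀ k, Q (φ k) (p k)) ∧ ∀ k, g (p k) = c := by
  have h2 : ∃ c, ∃ᶠ k in atTop, ∃ p, Q k p ∧ g p = c := by
    by_contra! hc
    have : ∀ᶠ k in atTop, ∀ c, ¬ ∃ p, Q k p ∧ g p = c := by
      rw [eventually_all]
      intro c
      simpa [Filter.not_frequently] using hc c
    obtain ⟨k, ⟨p, hp⟩, hk⟩ := (h.and this).exists
    exact hk (g p) ⟨p, hp, rfl⟩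
  obtain ⟨c, hc⟩ := h2
  obtain ⟨φ, hφ, hk⟩ := extraction_of_frequently_atTop hc
  choose p hp using hk
  exact ⟨φ, p, c, hφ.tendsto_atTop, fun k => (hp k).1, fun k => (hp k).2⟩

lemma hadamard {n l : ℕ} {F : Eu n → Eu l} {F' : Eu n → Eu n → Eu l}
    (hLip : LocallyLipschitz F) (hF' : IsDirDeriv F F') {x d : Eu n} {T : ℕ → ℝ} {D : ℕ → Eu n}
    (hT : ∀ k, 0 < T k) (hT0 : Tendsto T atTop (𝓝 0)) (hD : Tendsto D atTop (𝓝 d)) :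
    Tendsto (fun k => (T k)⁻¹ • (F (x + T k • D k) - F x)) atTop (𝓝 (F' x d)) := by
  have h1 : Tendsto (fun k => (T k)⁻¹ • (F (x + T k • d) - F x)) atTop (𝓝 (F' x d)) :=
    (hF' x d).comp (tendsto_nhdsWithin_iff.mpr ⟨hT0, Eventually.of_forall hT⟩)
  obtain ⟨K, U, hU, hK⟩ := hLip x
  have h2 : Tendsto (fun k => x + T k • d) atTop (𝓝 x) := by
    simpa using tendsto_const_nhds.add (hT0.smul_const d)
  have h3 : Tendsto (fun k => x + T k • D k) atTop (𝓝 x) := by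
    simpa using tendsto_const_nhds.add (hT0.smul hD)
  have h4 : Tendsto (fun k => (T k)⁻¹ • (F (x + T k • D k) - F (x + T k • d))) atTop (𝓝 0) := by
    rw [tendsto_zero_iff_norm_tendsto_zero]
    have h5 : Tendsto (fun k => (K:ℝ) * ‖D k - d‖) atTop (𝓝 0) := by
      simpa using ((hD.sub_const d).norm).const_mul (K:ℝ)
    refine squeeze_zero' (Eventually.of_forall fun _ => norm_nonneg _) ?_ h5
    filter_upwards [h2.eventually hU, h3.eventually hU] with k hk2 hk3
    have h6 := hK.dist_le_mul _ hk3 _ hk2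
    rw [dist_eq_norm, dist_eq_norm, add_sub_add_left_eq_sub, ← smul_sub, norm_smul,
      Real.norm_eq_abs, abs_of_pos (hT k)] at h6
    rw [norm_smul, norm_inv, Real.norm_eq_abs, abs_of_pos (hT k), inv_mul_le_iff₀ (hT k)]
    linarith
  have := h1.add h4
  simp only [add_zero, ← smul_add] at this
  refine this.congr fun k => ?_
  congr 1; abel

lemma align_bound {l : ℕ} {δ lam δ' lam' : Eu l} {m ρ : ℝ} (hm : 0 < m) (hρ0 : 0 < ρ)
    (hρ : ρ ≤ 1/2) (hlam : lam = m • δ) (h1 : ‖δ' - δ‖ ≤ ρ * ‖δ‖) (h2 : ‖lam' - lam‖ ≤ ρ * ‖lam‖) :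
    ‖‖δ'‖ • lam' - ‖lam'‖ • δ'‖ ≤ ‖δ'‖ * ‖lam'‖ * (12 * ρ) ∧
    ‖δ'‖ ≤ 3 / 2 * ‖δ‖ ∧ ‖lam'‖ ≤ 3 / 2 * (m * ‖δ‖) := by
  have hL : ‖lam‖ = m * ‖δ‖ := by rw [hlam, norm_smul, Real.norm_eq_abs, abs_of_pos hm]
  have a1 := abs_norm_sub_norm_le δ' δ
  have a2 := abs_norm_sub_norm_le lam' lam
  have a1' := abs_le.mp (a1.trans h1)
  have a2' := abs_le.mp (a2.trans h2)
  have n1 := norm_nonneg δ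
  have n2 := norm_nonneg lam
  have b1 : ρ * ‖δ‖ ≤ 1/2 * ‖δ‖ := by gcongr
  have b2 : ρ * ‖lam‖ ≤ 1/2 * ‖lam‖ := by gcongr
  have e : ‖δ'‖ • lam' - ‖lam'‖ • δ' = (‖δ'‖ - ‖δ‖) • lam' + ‖δ‖ • (lam' - lam)
      + (‖lam‖ - ‖lam'‖) • δ' + ‖lam‖ • (δ - δ') := by
    have : ‖δ‖ • lam = ‖lam‖ • δ := by rw [hL, hlam, smul_smul, mul_comm]
    simp only [sub_smul, smul_sub, this]
    abel
  refine ⟨?_, by linarith, by linarith⟩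
  rw [e]
  have c1 : ‖(‖δ'‖ - ‖δ‖) • lam'‖ ≤ ρ * ‖δ‖ * ‖lam'‖ := by
    rw [norm_smul]; gcongr; exact a1.trans h1
  have c2 : ‖‖δ‖ • (lam' - lam)‖ ≤ ‖δ‖ * (ρ * ‖lam‖) := by
    rw [norm_smul, norm_norm]; gcongr
  have c3 : ‖(‖lam‖ - ‖lam'‖) • δ'‖ ≤ ρ * ‖lam‖ * ‖δ'‖ := by
    rw [norm_smul, Real.norm_eq_abs, abs_sub_comm]; gcongr; exact a2.trans h2
  have c4 : ‖‖lam‖ • (δ - δ')‖ ≤ ‖lam‖ * (ρ * ‖δ‖) := by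
    rw [norm_smul, norm_norm, norm_sub_rev]; gcongr
  have d1 : ‖δ‖ ≤ 2 * ‖δ'‖ := by linarith
  have d2 : ‖lam‖ ≤ 2 * ‖lam'‖ := by linarith
  have f1 : ‖δ‖ * ‖lam'‖ ≤ 2 * ‖δ'‖ * ‖lam'‖ := by gcongr
  have f2 : ‖δ‖ * ‖lam‖ ≤ (2 * ‖δ'‖) * (2 * ‖lam'‖) := by gcongr
  have f3 : ‖lam‖ * ‖δ'‖ ≤ 2 * ‖lam'‖ * ‖δ'‖ := by gcongr
  refine (norm_add_le _ _).trans ?_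
  refine (add_le_add_left ((norm_add_le _ _).trans (add_le_add_left (norm_add_le _ _) _)) _).trans ?_
  have g1 := mul_le_mul_of_nonneg_left f1 hρ0.le
  have g2 := mul_le_mul_of_nonneg_left f2 hρ0.le
  have g3 := mul_le_mul_of_nonneg_left f3 hρ0.le
  nlinarith

lemma pattern {l : ℕ} {I S : Set (Fin l)} {u lam lam' : Eu l} (huI : ∀ i ∉ I, u i = 0)
    (h1 : ∀ i ∈ I, lam i ≠ 0) (h2 : {i | 0 < lam i} = S) (h3 : {i | 0 < lam' i} = S) :
    ∀ i, u i ≠ 0 → (0 < lam' i → 0 < lam i) ∧ (lam' i < 0 → lam i < 0) := by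
  intro i hi
  have hiI : i ∈ I := by by_contra h; exact hi (huI i h)
  have he : (0 < lam i) ↔ (0 < lam' i) := by
    have : i ∈ {i | 0 < lam i} ↔ i ∈ {i | 0 < lam' i} := by rw [h2, h3]
    exact this
  refine ⟨he.mpr, fun h => ?_⟩
  have h4 : ¬ 0 < lam i := fun h5 => absurd (he.mp h5) h.not_gt
  exact lt_of_le_of_ne (not_lt.mp h4) (h1 i hiI)

lemma localMin_ball {n : ℕ} {f : Eu n → ℝ} {X : Set (Eu n)} {x : Eu n} (h : IsLocalMinOn f X x) :
    ∃ r > 0, ∀ y ∈ closedBall x r, y ∈ X → f x ≤ f y := by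
  have h1 : ∀ᶠ y in 𝓝 x, y ∈ X → f x ≤ f y := eventually_nhdsWithin_iff.mp h
  obtain ⟨r, hr, h2⟩ := Metric.nhds_basis_closedBall.mem_iff.mp h1
  exact ⟨r, hr, fun y hy => h2 hy⟩

/-- Stationarity data at one step. -/
def GoodStep {n l t : ℕ} (f : Eu n → ℝ) (F : Eu n → Eu l) (a b : Fin t → Fin l → EReal)
    (p : Eu n × Eu l × Eu l × Eu n) : Prop :=
  p.2.2.2 - gradient f p.1 ∈ scalSubdiff F p.2.1 p.1 ∧
  BoxN a b (F p.1 - p.2.2.1) p.2.1 ∧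
  ∀ i ∈ activeI F a b p.1 p.2.2.1, p.2.1 i ≠ 0

lemma part_a {n l t : ℕ}
    (f : Eu n → ℝ) (hf : ContDiff ℝ 1 f)
    (F : Eu n → Eu l) (F' : Eu n → Eu n → Eu l)
    (hLip : LocallyLipschitz F) (hF' : IsDirDeriv F F')
    (a b : Fin t → Fin l → EReal)
    (hsum : SumRule F F')
    (x : Eu n) (hfeas : F x ∈ GammaODP a b)
    (hmin : IsLocalMinOn f (F ⁻¹' GammaODP a b) x)
    (hN : NNAMCQ F (GammaODP a b) x) : ODPsubMFC f F a b x := by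
  obtain ⟨r, hr, hball⟩ := localMin_ball hmin
  have hη : Tendsto (fun k : ℕ => 1 / ((k:ℝ) + 1)) atTop (𝓝 0) :=
    tendsto_one_div_add_atTop_nhds_zero_nat
  have hsq : Tendsto (fun k : ℕ => Real.sqrt (2 * (1 / ((k:ℝ) + 1)))) atTop (𝓝 0) := by
    simpa using (hη.const_mul 2).sqrt
  have hsq4 : Tendsto (fun k : ℕ => Real.sqrt (4 * (1 / ((k:ℝ) + 1)))) atTop (𝓝 0) := by
    simpa using (hη.const_mul 4).sqrt
  have hex : ∀ᶠ k : ℕ in atTop, ∃ p : Eu n × Eu l × Eu l × Eu n, GoodStep f F a b p ∧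
      ‖p.1 - x‖ ≤ Real.sqrt (2 * (1 / ((k:ℝ) + 1))) ∧
      ‖p.2.2.1‖ ≤ Real.sqrt (4 * (1 / ((k:ℝ) + 1))) + 1 / ((k:ℝ) + 1) ∧
      ‖p.2.2.2‖ ≤ 2 * Real.sqrt (2 * (1 / ((k:ℝ) + 1))) + 1 / ((k:ℝ) + 1) := by
    filter_upwards [hsq.eventually (gt_mem_nhds hr)] with k hk
    have hkp : 0 < 1 / ((k:ℝ) + 1) := by positivity
    obtain ⟨x', δ, m, hm, h1, h2, h3, h4, h5, h6⟩ := penalty hf hLip (isClosed_GammaODP a b)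
      (x := x) (w := x) (t := 1) (η := 1 / ((k:ℝ) + 1)) hball hfeas one_pos hkp (by linarith)
      (by simpa using hk)
    obtain ⟨δ', lam', v', g1, g2, g3, g4, g5, g6⟩ := perturb hLip hF' hsum
      (show _ ∈ scalSubdiff F (m • δ) x' from h6.lim) (BoxN.of_proj hm h1 h2) hkp
    refine ⟨(x', lam', δ', v' + gradient f x'), ⟨by simpa using g4, g5, g6⟩, by simpa using h3,
      ?_, ?_⟩
    · have e1 : ‖δ‖ ≤ Real.sqrt (4 * (1 / ((k:ℝ) + 1))) := by
        apply Real.le_sqrt_of_sq_le; simpa using h5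
      have e2 : ‖δ'‖ ≤ ‖δ' - δ‖ + ‖δ‖ := by simpa using norm_add_le (δ' - δ) δ
      show ‖δ'‖ ≤ _
      linarith
    · show ‖v' + gradient f x'‖ ≤ _
      have e1 : v' + gradient f x' = (v' - (-((2 / (1:ℝ)) • (x' - x)) - gradient f x'))
        + (-((2 / (1:ℝ)) • (x' - x))) := by abel
      rw [e1]
      refine (norm_add_le _ _).trans ?_
      have e2 : ‖-((2 / (1:ℝ)) • (x' - x))‖ = 2 * ‖x' - x‖ := by
        rw [norm_neg, norm_smul]; norm_num
      rw [e2]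
      linarith
  obtain ⟨φ, p, ⟨I, S⟩, hφ, hQ, hc⟩ := extract_seq hex
    (fun p => ((activeI F a b p.1 p.2.2.1 : Set (Fin l)), {i | 0 < p.2.1 i}))
  have hI : ∀ k, activeI F a b (p k).1 (p k).2.2.1 = I := fun k => congrArg Prod.fst (hc k)
  have hS : ∀ k, {i | 0 < (p k).2.1 i} = S := fun k => congrArg Prod.snd (hc k)
  have hlam : ∀ k, ∀ i ∈ I, (p k).2.1 i ≠ 0 := fun k i hi => (hQ k).1.2.2 i (hI k ▸ hi)
  have hx : Tendsto (fun k => (p k).1) atTop (𝓝 x) := by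
    rw [tendsto_iff_norm_sub_tendsto_zero]
    exact squeeze_zero (fun _ => norm_nonneg _) (fun k => (hQ k).2.1) (hsq.comp hφ)
  have hδ : Tendsto (fun k => (p k).2.2.1) atTop (𝓝 0) := by
    rw [tendsto_zero_iff_norm_tendsto_zero]
    refine squeeze_zero (fun _ => norm_nonneg _) (fun k => (hQ k).2.2.1) ?_
    have hh := (hsq4.add hη).comp hφ
    simp only [mul_zero, add_zero] at hh
    exact hh
  have hε : Tendsto (fun k => (p k).2.2.2) atTop (𝓝 0) := by
    rw [tendsto_zero_iff_norm_tendsto_zero]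
    refine squeeze_zero (fun _ => norm_nonneg _) (fun k => (hQ k).2.2.2) ?_
    have hh := ((hsq.const_mul 2).add hη).comp hφ
    simp only [mul_zero, add_zero] at hh
    exact hh
  have hy : Tendsto (fun k => F (p k).1 - (p k).2.2.1) atTop (𝓝 (F x)) := by
    simpa using ((hLip.continuous.tendsto x).comp hx).sub hδ
  refine ⟨I, fun k => (p k).1, fun k => (p k).2.1, fun k => (p k).2.2.1, fun k => (p k).2.2.2,
    ?_, ⟨fun k => (hQ k).1.1, fun k => regNormal_sub_lim (hQ k).1.2.1.reg, hx, hδ, hε⟩,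
    fun k => (hI k).symm, Or.inr ?_⟩
  · obtain ⟨k, hk⟩ := (hy.eventually (eventually_act a b (F x))).exists
    have e1 : activeI F a b x 0 = actSet a b (F x - 0) := rfl
    rw [e1, sub_zero, ← hI k]
    exact hk
  · rintro u hu0 hu huI k ⟨s, hs, h0⟩
    apply hu0
    apply mkMu_eq_zero huI (hlam k)
    apply hN
    · have := qual_mem (d := 0) hsum hu huI (hlam k) (s := s) (x := x) (by
        intro i hi
        rw [dirDeriv_zero hF']
        simp only [PiLp.zero_apply, mul_zero, dirLimSubdiff_zero]
        exact hs i hi) h0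
      rw [scalDirSubdiff, dirDeriv_zero hF', inner_zero_right, dirLimSubdiff_zero] at this
      exact this
    · exact ⟨hfeas, fun k => F (p k).1 - (p k).2.2.1, fun _ => mkMu u (p k).2.1, hy,
        tendsto_const_nhds, fun k' => (mkMu_box (hQ k').1.2.1 hu
          (pattern huI (hlam k') (hS k') (hS k))).reg⟩

lemma continuous_grad {n : ℕ} {f : Eu n → ℝ} (hf : ContDiff ℝ 1 f) : Continuous (gradient f) :=
  (InnerProductSpace.toDual ℝ (Eu n)).symm.continuous.comp (hf.continuous_fderiv (by norm_num))

lemma part_b {n l t : ℕ}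
    (f : Eu n → ℝ) (hf : ContDiff ℝ 1 f)
    (F : Eu n → Eu l) (F' : Eu n → Eu n → Eu l)
    (hLip : LocallyLipschitz F) (hF' : IsDirDeriv F F')
    (a b : Fin t → Fin l → EReal)
    (hsum : SumRule F F')
    (x : Eu n) (hfeas : F x ∈ GammaODP a b)
    (hmin : IsLocalMinOn f (F ⁻¹' GammaODP a b) x)
    (d : Eu n) (hd : d ∈ implCritCone f F (GammaODP a b) x) (hd1 : ‖d‖ = 1)
    (hg : gradient f x ≠ 0) (hN : FOSCMS F F' (GammaODP a b) x d) :
    ODPsubMFCdir f F F' a b x d := by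
  obtain ⟨r, hr, hball⟩ := localMin_ball hmin
  obtain ⟨hgd, -, D, T, hD, hT, hT0, hX⟩ := hd
  -- the values `η`
  let η : ℕ → ℝ := fun k => max 0 ((T k)⁻¹ * (f (x + T k • D k) - f x)) + 1 / ((k:ℝ) + 1)
  have hηpos : ∀ k, 0 < η k := by
    intro k
    have h1 : 0 < 1 / ((k:ℝ) + 1) := by positivity
    have h2 : 0 ≤ max 0 ((T k)⁻¹ * (f (x + T k • D k) - f x)) := le_max_left _ _
    show 0 < _ + _
    linarith
  have hone : Tendsto (fun k : ℕ => 1 / ((k:ℝ) + 1)) atTop (𝓝 0) :=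
    tendsto_one_div_add_atTop_nhds_zero_nat
  have hgrad : HasGradientAt f (gradient f x) x :=
    ((hf.differentiable (by norm_num)) x).hasGradientAt
  have hw : Tendsto (fun k => x + T k • D k) atTop (𝓝 x) := by
    simpa using tendsto_const_nhds.add (hT0.smul hD)
  have hη0 : Tendsto η atTop (𝓝 0) := by
    have h1 : Tendsto (fun k => (T k)⁻¹ * (f (x + T k • D k) - f x)) atTop
        (𝓝 ⟪gradient f x, d⟫) := by
      have h3 : Tendsto (fun k => T k • D k) atTop (𝓝 0) := by simpa using hT0.smul hD
      have h2 := (hasFDerivWithinAt_univ.2 hgrad.hasFDerivAt).lim (l := atTop)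
        (c := fun k => (T k)⁻¹) (d := fun k => T k • D k) (v := d) h3
        (Eventually.of_forall fun _ => mem_univ _) (hD.congr fun k => by
          rw [inv_smul_smul₀ (hT k).ne'])
      exact h2
    have h4 := ((tendsto_const_nhds (x := (0:ℝ))).max h1).add hone
    rw [max_eq_left hgd, add_zero] at h4
    exact h4
  have hfw : ∀ k, f (x + T k • D k) ≤ f x + η k * T k := by
    intro k
    have h1 : (T k)⁻¹ * (f (x + T k • D k) - f x) ≤ η k := by
      have h1 : 0 < 1 / ((k:ℝ) + 1) := by positivity
      have := le_max_right 0 ((T k)⁻¹ * (f (x + T k • D k) - f x))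
      show _ ≤ _ + _
      linarith
    rw [inv_mul_le_iff₀ (hT k)] at h1
    linarith
  have hsq : Tendsto (fun k : ℕ => Real.sqrt (2 * η k)) atTop (𝓝 0) := by
    simpa using (hη0.const_mul 2).sqrt
  have hsq4 : Tendsto (fun k : ℕ => Real.sqrt (4 * η k)) atTop (𝓝 0) := by
    simpa using (hη0.const_mul 4).sqrt
  have hgpos : 0 < ‖gradient f x‖ := norm_pos_iff.mpr hg
  obtain ⟨r', hr', hgr⟩ : ∃ r' > 0, ∀ y ∈ ball x r', ‖gradient f x‖ / 2 < ‖gradient f y‖ := by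
    have : ∀ᶠ y in 𝓝 x, ‖gradient f x‖ / 2 < ‖gradient f y‖ :=
      continuousAt_const.eventually_lt (continuous_grad hf).norm.continuousAt (by linarith)
    obtain ⟨r', hr', h⟩ := Metric.nhds_basis_ball.mem_iff.mp this
    exact ⟨r', hr', fun y hy => h hy⟩
  have hwr : Tendsto (fun k => ‖x + T k • D k - x‖ + Real.sqrt (2 * η k) * T k) atTop (𝓝 0) := by
    simpa using ((hw.sub_const x).norm).add (hsq.mul hT0)
  have hDn : Tendsto (fun k => ‖D k‖ - Real.sqrt (2 * η k)) atTop (𝓝 1) := by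
    simpa [hd1] using hD.norm.sub hsq
  have hex : ∀ᶠ k : ℕ in atTop, ∃ p : Eu n × Eu l × Eu l × Eu n, GoodStep f F a b p ∧
      ‖p.1 - (x + T k • D k)‖ ≤ Real.sqrt (2 * η k) * T k ∧
      T k / 2 ≤ ‖p.1 - x‖ ∧
      ‖p.2.2.1‖ ≤ 3 / 2 * Real.sqrt (4 * η k) * T k ∧
      ‖p.2.2.2‖ ≤ 2 * Real.sqrt (2 * η k) + 1 / ((k:ℝ) + 1) ∧
      ‖‖p.2.2.1‖ • p.2.1 - ‖p.2.1‖ • p.2.2.1‖ ≤ ‖p.2.2.1‖ * ‖p.2.1‖ *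
        (12 * (1 / ((k:ℝ) + 1))) ∧
      ‖p.2.2.1‖ * ‖p.2.1‖ ≤ 9 * T k := by
    filter_upwards [hwr.eventually (gt_mem_nhds (lt_min hr hr')),
      (hsq.const_mul 2).eventually (gt_mem_nhds (show 2 * 0 < ‖gradient f x‖ / 2 by simpa)),
      hDn.eventually (lt_mem_nhds (show (1/2 : ℝ) < 1 by norm_num)),
      hη0.eventually (gt_mem_nhds one_pos),
      hone.eventually (gt_mem_nhds (show (0:ℝ) < 1/2 by norm_num))] with k hk1 hk2 hk3 hk4 hk5
    have hkp : 0 < 1 / ((k:ℝ) + 1) := by positivity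
    obtain ⟨x', δ, m, hm, h1, h2, h3, h4, h5, h6⟩ := penalty hf hLip (isClosed_GammaODP a b)
      (x := x) (w := x + T k • D k) (t := T k) (η := η k) hball (hX k) (hT k) (hηpos k) (hfw k)
      (lt_of_lt_of_le hk1 (min_le_left _ _))
    have hTk := hT k
    have hgn : ‖-((2 / T k) • (x' - (x + T k • D k)))‖ ≤ 2 * Real.sqrt (2 * η k) := by
      rw [norm_neg, norm_smul, Real.norm_eq_abs, abs_of_pos (by positivity)]
      calc 2 / T k * ‖x' - (x + T k • D k)‖ ≤ 2 / T k * (Real.sqrt (2 * η k) * T k) := by gcongr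
        _ = 2 * Real.sqrt (2 * η k) := by field_simp
    have hδ0 : δ ≠ 0 := by
      rintro rfl
      simp only [smul_zero, inner_zero_left] at h6
      have e1 := h6.const
      rw [sub_eq_zero] at e1
      rw [e1] at hgn
      have e2 : x' ∈ ball x r' := by
        rw [mem_ball, dist_eq_norm]
        have e3 : ‖x' - x‖ ≤ ‖x' - (x + T k • D k)‖ + ‖x + T k • D k - x‖ := by
          exact norm_sub_le_norm_sub_add_norm_sub _ _ _
        have e4 := lt_of_lt_of_le hk1 (min_le_right _ _)
        linarith
      have := hgr x' e2
      linarith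
    have hδp : 0 < ‖δ‖ := norm_pos_iff.mpr hδ0
    have hlp : 0 < ‖m • δ‖ := by rw [norm_smul, Real.norm_eq_abs, abs_of_pos hm]; positivity
    obtain ⟨δ', lam', v', g1, g2, g3, g4, g5, g6⟩ := perturb hLip hF' hsum
      (show _ ∈ scalSubdiff F (m • δ) x' from h6.lim) (BoxN.of_proj hm h1 h2)
      (r := min (1 / ((k:ℝ) + 1)) (min (1 / ((k:ℝ) + 1) * ‖δ‖) (1 / ((k:ℝ) + 1) * ‖m • δ‖)))
      (lt_min hkp (lt_min (by positivity) (by positivity)))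
    have g1' := (g1.trans_le ((min_le_right _ _).trans (min_le_left _ _))).le
    have g2' := (g2.trans_le ((min_le_right _ _).trans (min_le_right _ _))).le
    have g3' := (g3.trans_le (min_le_left _ _)).le
    obtain ⟨A1, A2, A3⟩ := align_bound hm hkp hk5.le rfl g1' g2'
    refine ⟨(x', lam', δ', v' + gradient f x'), ⟨by simpa using g4, g5, g6⟩, h3,
      ?_, ?_, ?_, A1, ?_⟩
    · show _ ≤ ‖x' - x‖
      have e1 : ‖T k • D k‖ ≤ ‖x' - x‖ + ‖x' - (x + T k • D k)‖ := by
        have := norm_sub_le (x' - x) (x' - (x + T k • D k))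
        have e : x' - x - (x' - (x + T k • D k)) = T k • D k := by abel
        rwa [e] at this
      rw [norm_smul, Real.norm_eq_abs, abs_of_pos hTk] at e1
      have := mul_lt_mul_of_pos_left hk3 hTk
      nlinarith
    · have e1 : ‖δ‖ ≤ Real.sqrt (4 * η k) * T k := by
        rw [← Real.sqrt_sq hTk.le, ← Real.sqrt_mul (by linarith [hηpos k])]
        exact Real.le_sqrt_of_sq_le h5
      show ‖δ'‖ ≤ _
      linarith
    · show ‖v' + gradient f x'‖ ≤ _
      have e1 : v' + gradient f x' = (v' - (-((2 / T k) • (x' - (x + T k • D k)))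
        - gradient f x')) + (-((2 / T k) • (x' - (x + T k • D k)))) := by abel
      rw [e1]
      refine (norm_add_le _ _).trans ?_
      linarith
    · show ‖δ'‖ * ‖lam'‖ ≤ _
      calc ‖δ'‖ * ‖lam'‖ ≤ (3 / 2 * ‖δ‖) * (3 / 2 * (m * ‖δ‖)) := by gcongr
        _ = 9 / 4 * (m * ‖δ‖^2) := by ring
        _ ≤ 9 / 4 * (4 * η k * T k) := by gcongr
        _ ≤ 9 * T k := by nlinarith
  obtain ⟨φ, p, ⟨I, S⟩, hφ, hQ, hc⟩ := extract_seq hex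
    (fun p => ((activeI F a b p.1 p.2.2.1 : Set (Fin l)), {i | 0 < p.2.1 i}))
  have hI : ∀ k, activeI F a b (p k).1 (p k).2.2.1 = I := fun k => congrArg Prod.fst (hc k)
  have hS : ∀ k, {i | 0 < (p k).2.1 i} = S := fun k => congrArg Prod.snd (hc k)
  have hlam : ∀ k, ∀ i ∈ I, (p k).2.1 i ≠ 0 := fun k i hi => (hQ k).1.2.2 i (hI k ▸ hi)
  have hTp : ∀ k, 0 < ‖(p k).1 - x‖ := fun k =>
    lt_of_lt_of_le (half_pos (hT (φ k))) (hQ k).2.2.1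
  have hne : ∀ k, (p k).1 ≠ x := fun k h => by
    have := hTp k
    simp [h] at this
  have hx : Tendsto (fun k => (p k).1) atTop (𝓝 x) := by
    rw [tendsto_iff_norm_sub_tendsto_zero]
    refine squeeze_zero (fun _ => norm_nonneg _) (fun k => ?_) (hwr.comp hφ)
    have e3 : ‖(p k).1 - x‖ ≤ ‖(p k).1 - (x + T (φ k) • D (φ k))‖
        + ‖x + T (φ k) • D (φ k) - x‖ := by
      exact norm_sub_le_norm_sub_add_norm_sub _ _ _
    have := (hQ k).2.1
    simp only [Function.comp]
    linarith
  have hxn : Tendsto (fun k => ‖(p k).1 - x‖) atTop (𝓝 0) := by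
    simpa using (hx.sub_const x).norm
  -- direction
  have he : Tendsto (fun k => (T (φ k))⁻¹ • ((p k).1 - x)) atTop (𝓝 d) := by
    have h1 : Tendsto (fun k => (T (φ k))⁻¹ • ((p k).1 - (x + T (φ k) • D (φ k)))) atTop (𝓝 0) := by
      rw [tendsto_zero_iff_norm_tendsto_zero]
      refine squeeze_zero (fun _ => norm_nonneg _) (fun k => ?_) (hsq.comp hφ)
      have hTk := hT (φ k)
      rw [norm_smul, norm_inv, Real.norm_eq_abs, abs_of_pos hTk, inv_mul_le_iff₀ hTk, mul_comm]
      exact (hQ k).2.1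
    have h2 := h1.add (hD.comp hφ)
    rw [zero_add] at h2
    refine h2.congr fun k => ?_
    have hTk := hT (φ k)
    have e : (p k).1 - x = ((p k).1 - (x + T (φ k) • D (φ k))) + T (φ k) • D (φ k) := by abel
    rw [e, smul_add (T (φ k))⁻¹, inv_smul_smul₀ hTk.ne']
    rfl
  have hdir : Tendsto (fun k => ‖(p k).1 - x‖⁻¹ • ((p k).1 - x)) atTop (𝓝 d) := by
    have h1 := (he.norm.inv₀ (by rw [hd1]; norm_num)).smul he
    rw [hd1, inv_one, one_smul] at h1
    refine h1.congr fun k => ?_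
    have hTk := hT (φ k)
    rw [norm_smul, norm_inv, Real.norm_eq_abs, abs_of_pos hTk, smul_smul]
    congr 1
    field_simp
  have hδT : Tendsto (fun k => ‖(p k).1 - x‖⁻¹ • (p k).2.2.1) atTop (𝓝 (0 : Eu l)) := by
    rw [tendsto_zero_iff_norm_tendsto_zero]
    have h1 : Tendsto (fun k => 3 * Real.sqrt (4 * η (φ k))) atTop (𝓝 0) := by
      have hh := (hsq4.const_mul 3).comp hφ
      simp only [mul_zero, add_zero] at hh
      exact hh
    refine squeeze_zero (fun _ => norm_nonneg _) (fun k => ?_) h1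
    rw [norm_smul, norm_inv, norm_norm, inv_mul_le_iff₀ (hTp k)]
    have h2 := (hQ k).2.2.1
    have h3 := (hQ k).2.2.2.1
    have h4 := mul_le_mul_of_nonneg_right h2 (Real.sqrt_nonneg (4 * η (φ k)))
    linarith
  have hδ : Tendsto (fun k => (p k).2.2.1) atTop (𝓝 0) := by
    have h1 := hxn.smul hδT
    rw [smul_zero] at h1
    refine h1.congr fun k => ?_
    rw [smul_inv_smul₀ (hTp k).ne']
  have hε : Tendsto (fun k => (p k).2.2.2) atTop (𝓝 0) := by
    rw [tendsto_zero_iff_norm_tendsto_zero]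
    refine squeeze_zero (fun _ => norm_nonneg _) (fun k => (hQ k).2.2.2.2.1) ?_
    have hh := ((hsq.const_mul 2).add hone).comp hφ
    simp only [mul_zero, add_zero] at hh
    exact hh
  have hy : Tendsto (fun k => F (p k).1 - (p k).2.2.1) atTop (𝓝 (F x)) := by
    simpa using ((hLip.continuous.tendsto x).comp hx).sub hδ
  refine ⟨I, fun k => (p k).1, fun k => (p k).2.1, fun k => (p k).2.2.1, fun k => (p k).2.2.2,
    ?_, ⟨⟨fun k => (hQ k).1.1, fun k => regNormal_sub_lim (hQ k).1.2.1.reg, hx, hδ, hε⟩, hne,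
      hdir, hδT, ⟨fun k => 12 * (1 / ((φ k : ℝ) + 1)), fun k => by positivity, ?_,
        fun k => (hQ k).2.2.2.2.2.1⟩, ⟨18, fun k => ?_⟩⟩,
    fun k => (hI k).symm, Or.inr ?_⟩
  · obtain ⟨k, hk⟩ := (hy.eventually (eventually_act a b (F x))).exists
    have e1 : activeI F a b x 0 = actSet a b (F x - 0) := rfl
    rw [e1, sub_zero, ← hI k]
    exact hk
  · have hh := (hone.const_mul 12).comp hφ
    simp only [mul_zero] at hh
    exact hh
  · rw [div_le_iff₀ (hTp k)]
    have h2 := (hQ k).2.2.1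
    have h3 := (hQ k).2.2.2.2.2.2
    linarith
  · rintro u hu0 hu huI k ⟨s, hs, h0⟩
    apply hu0
    apply mkMu_eq_zero huI (hlam k)
    apply hN
    · exact qual_mem hsum hu huI (hlam k) hs h0
    · refine ⟨hfeas, fun k => ‖(p k).1 - x‖⁻¹ • (F (p k).1 - (p k).2.2.1 - F x),
        fun k => ‖(p k).1 - x‖, fun _ => mkMu u (p k).2.1, ?_, hTp, hxn,
        tendsto_const_nhds, fun k' => ?_⟩
      · have h1 := (hadamard (x := x) hLip hF' hTp hxn hdir).sub hδT
        rw [sub_zero] at h1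
        refine h1.congr fun k => ?_
        rw [smul_inv_smul₀ (hTp k).ne', add_sub_cancel, ← smul_sub]
        congr 1; abel
      · rw [smul_inv_smul₀ (hTp k').ne', add_sub_cancel]
        exact (mkMu_box (hQ k').1.2.1 hu (pattern huI (hlam k') (hS k') (hS k))).reg

end Helpers


/-- NNAMCQ implies ODP-subMFC, and FOSCMS(d) implies ODP-subMFC(d), at local minimizers
of the orthodisjunctive problem. -/
theorem stmt19 {n l t : ℕ}
    (f : Eu n → ℝ) (hf : ContDiff ℝ 1 f)
    (F : Eu n → Eu l) (F' : Eu n → Eu n → Eu l)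
    (hLip : LocallyLipschitz F) (hF' : IsDirDeriv F F')
    (a b : Fin t → Fin l → EReal) (hab : ∀ j i, a j i ≤ b j i)
    (hsum : SumRule F F')
    (x : Eu n) (hfeas : F x ∈ GammaODP a b)
    (hmin : IsLocalMinOn f (F ⁻¹' GammaODP a b) x) :
    (NNAMCQ F (GammaODP a b) x → ODPsubMFC f F a b x) ∧
    (∀ d ∈ implCritCone f F (GammaODP a b) x, ‖d‖ = 1 → gradient f x ≠ 0 →
      FOSCMS F F' (GammaODP a b) x d → ODPsubMFCdir f F F' a b x d) := by
  exact ⟨part_a f hf F F' hLip hF' a b hsum x hfeas hmin,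
    fun d hd hd1 hg hN => part_b f hf F F' hLip hF' a b hsum x hfeas hmin d hd hd1 hg hN⟩

end
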